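/- arXiv:0709.4352 — 2 statements merged into one kernel-verified Lean document; each statement's English description precedes it below -/
import Mathlib

section
/- Let A be a real symmetric n×n matrix with Newton transformations P_k. Then for every 0 ≤ k ≤ n−1, trace(A²·P_k) = binom(n,k+1)·( n·H_1·H_{k+1} − (n−k−1)·H_{k+2} ), where H_j = 0 whenever j > n. -/
/-- The `k`-th elementary symmetric function of `κ₁, …, κₙ`:
`S_k = σ_k(κ₁,…,κₙ)` (with `S_0 = 1`). -/
noncomputable def Ssym (n : ℕ) (κ : Fin n → ℝ) (k : ℕ) : ℝ :=
  ∑ t ∈ (Finset.univ : Finset (Fin n)).powersetCard k, ∏ i ∈ t, κ i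

/-- The `k`-th mean curvature `H_k`, defined by `binom(n,k)·H_k = (−1)^k·S_k`
(so `H_k = 0` for `k > n`). -/
noncomputable def Hmc (n : ℕ) (κ : Fin n → ℝ) (k : ℕ) : ℝ :=
  (-1 : ℝ) ^ k * Ssym n κ k / (n.choose k : ℝ)

/-- The Newton transformations, defined inductively by `P_0 = I` and
`P_k = binom(n,k)·H_k·I + A·P_{k−1}`. -/
noncomputable def NewtonT (n : ℕ) (κ : Fin n → ℝ) (A : Matrix (Fin n) (Fin n) ℝ) :
    ℕ → Matrix (Fin n) (Fin n) ℝ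
  | 0 => 1
  | k + 1 => ((n.choose (k + 1) : ℝ) * Hmc n κ (k + 1)) • (1 : Matrix (Fin n) (Fin n) ℝ)
      + A * NewtonT n κ A k

/-!
The matrix `P(X) = adj(1 - X A)` is the generating function `∑ P_k X^k` of the Newton
transformations: comparing coefficients in `(1 - X A) P(X) = p(X) I`, where `p(X) = det(1 - X A)`,
gives their recursion, because the coefficient of `X^k` in `p = ∏ (1 - κ_i X)` is
`c_k = (-1)^k S_k = binom(n,k) H_k`. Jacobi's formula `p' = -trace(P(X) A)` then reads
`trace(A P_k) = -(k+1) c_{k+1}`. Since `A² P_k = A P_{k+1} - c_{k+1} A`, it follows that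
`trace(A² P_k) = c_1 c_{k+1} - (k+2) c_{k+2}`, and the theorem is this identity rewritten with
`(n-k-1) binom(n,k+1) = (k+2) binom(n,k+2)`.
-/

open Polynomial Matrix

section CommRing

variable {ι R : Type*} [CommRing R]

theorem cast_choose_succ_mul_sub (n k : ℕ) :
    (n.choose (k + 1) : R) * (n - k - 1) = n.choose (k + 2) * (k + 2) := by
  rcases le_or_gt (k + 1) n with hk | hk
  · have h := congrArg (Nat.cast (R := R)) (Nat.choose_succ_right_eq n (k + 1))
    push_cast [hk] at h
    linear_combination -h
  · simp [Nat.choose_eq_zero_of_lt hk, Nat.choose_eq_zero_of_lt (hk.trans (Nat.lt_succ_self _))]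

variable [Fintype ι]

theorem coeff_prod_one_sub_X_mul_C (κ : ι → R) (k : ℕ) :
    (∏ i, (1 - X * C (κ i))).coeff k =
      (-1) ^ k * ∑ t ∈ Finset.univ.powersetCard k, ∏ i ∈ t, κ i := by
  have hterm (t : Finset ι) : ∏ i ∈ t, -(X * C (κ i)) =
      monomial t.card ((-1) ^ t.card * ∏ i ∈ t, κ i) := by
    rw [Finset.prod_neg, Finset.prod_mul_distrib, Finset.prod_const, ← C_mul_X_pow_eq_monomial]
    simp only [map_mul, map_pow, map_neg, map_one, map_prod]
    ring
  simp only [sub_eq_add_neg, Finset.prod_one_add, hterm, finsetSum_coeff, coeff_monomial]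
  rw [← Finset.sum_filter, ← Finset.powersetCard_eq_filter, Finset.mul_sum]
  refine Finset.sum_congr rfl fun t ht => ?_
  rw [(Finset.mem_powersetCard.mp ht).2]

variable [DecidableEq ι]

theorem det_updateCol_eq_sum_perm (M : Matrix ι ι R) (i : ι) (v : ι → R) :
    (M.updateCol i v).det =
      ∑ σ : Equiv.Perm ι, Equiv.Perm.sign σ •
        ((∏ j ∈ Finset.univ.erase i, M (σ j) j) * v (σ i)) := by
  rw [det_apply]
  refine Finset.sum_congr rfl fun σ _ => ?_
  rw [← Finset.prod_erase_mul _ _ (Finset.mem_univ i), updateCol_self]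
  congr 2
  exact Finset.prod_congr rfl fun j hj => updateCol_ne (Finset.ne_of_mem_erase hj)

theorem derivative_det_eq_sum_det_updateCol (M : Matrix ι ι R[X]) :
    derivative M.det = ∑ i, (M.updateCol i fun j => derivative (M j i)).det := by
  simp only [det_apply M, det_updateCol_eq_sum_perm, derivative_sum, Units.smul_def,
    derivative_smul, derivative_prod_finset, Finset.smul_sum]
  exact Finset.sum_comm

theorem derivative_det_eq_trace_adjugate_mul (M : Matrix ι ι R[X]) :
    derivative M.det = (M.adjugate * M.map derivative).trace := by
  rw [derivative_det_eq_sum_det_updateCol]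
  refine Finset.sum_congr rfl fun i _ => ?_
  rw [← cramer_apply, cramer_eq_adjugate_mulVec]
  rfl

/-- The `k`-th Newton transformation of a square matrix `A` over a commutative ring, encoded as the
coefficient of `X ^ k` in the adjugate of `1 - X A`. -/
noncomputable def newtonTransform (A : Matrix ι ι R) (k : ℕ) : Matrix ι ι R :=
  (1 - (X : R[X]) • A.map C).adjugate.map fun p => p.coeff k

variable (A : Matrix ι ι R) (k : ℕ)

theorem adjugate_one_sub_X_smul_eq :
    (1 - (X : R[X]) • A.map C).adjugate =
      A.charpolyRev • 1 + (X : R[X]) • (A.map C * (1 - (X : R[X]) • A.map C).adjugate) := by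
  have h := mul_adjugate (1 - (X : R[X]) • A.map C)
  rw [sub_mul, one_mul, smul_mul_assoc] at h
  exact sub_eq_iff_eq_add.mp h

theorem mul_newtonTransform :
    A * newtonTransform A k =
      (A.map C * (1 - (X : R[X]) • A.map C).adjugate).map fun p => p.coeff k := by
  ext i j
  simp [newtonTransform, mul_apply, coeff_C_mul]

theorem newtonTransform_zero : newtonTransform A 0 = 1 := by
  ext i j
  have h := congrArg (fun M => (M i j).coeff 0) (adjugate_one_sub_X_smul_eq A)
  rcases eq_or_ne i j with rfl | hij
  · simpa [newtonTransform, coeff_zero_eq_eval_zero A.charpolyRev] using h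
  · simpa [newtonTransform, hij] using h

theorem newtonTransform_succ :
    newtonTransform A (k + 1) =
      A.charpolyRev.coeff (k + 1) • (1 : Matrix ι ι R) + A * newtonTransform A k := by
  rw [mul_newtonTransform]
  ext i j
  have h := congrArg (fun M => (M i j).coeff (k + 1)) (adjugate_one_sub_X_smul_eq A)
  rcases eq_or_ne i j with rfl | hij
  · simpa [newtonTransform] using h
  · simpa [newtonTransform, hij] using h

theorem trace_mul_newtonTransform :
    (A * newtonTransform A k).trace = -((k + 1) * A.charpolyRev.coeff (k + 1)) := by
  have hderiv : (1 - (X : R[X]) • A.map C).map derivative = -A.map C := by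
    ext1 i j
    simp [one_apply, apply_ite]
  have jacobi : derivative A.charpolyRev =
      -(A.map C * (1 - (X : R[X]) • A.map C).adjugate).trace := by
    rw [charpolyRev, derivative_det_eq_trace_adjugate_mul, hderiv, mul_neg, trace_neg,
      trace_mul_comm]
  have hcoeff : A.charpolyRev.coeff (k + 1) * (k + 1) = -(A * newtonTransform A k).trace := by
    rw [← coeff_derivative, jacobi, coeff_neg, mul_newtonTransform]
    simp [trace]
  rw [mul_comm, hcoeff, neg_neg]

theorem trace_sq_mul_newtonTransform :
    (A ^ 2 * newtonTransform A k).trace =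
      A.charpolyRev.coeff 1 * A.charpolyRev.coeff (k + 1) -
        (k + 2) * A.charpolyRev.coeff (k + 2) := by
  have hrec : A ^ 2 * newtonTransform A k =
      A * newtonTransform A (k + 1) - A.charpolyRev.coeff (k + 1) • A := by
    rw [newtonTransform_succ, mul_add, mul_smul_comm, mul_one, add_sub_cancel_left, sq, mul_assoc]
  rw [hrec, trace_sub, trace_smul, trace_mul_newtonTransform, coeff_charpolyRev_eq_neg_trace,
    smul_eq_mul]
  push_cast
  ring

theorem charpolyRev_eq_prod_of_charpoly_eq_prod {A : Matrix ι ι R} {κ : ι → R}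
    (hchar : A.charpoly = ∏ i, (X - C (κ i))) :
    A.charpolyRev = ∏ i, (1 - X * C (κ i)) := by
  rw [← reverse_charpoly, hchar, ← charpoly_diagonal, reverse_charpoly, charpolyRev,
    diagonal_map (map_zero C), ← diagonal_smul, ← diagonal_one, diagonal_sub, det_diagonal]
  rfl

end CommRing

theorem Ssym_eq_zero_of_lt {n k : ℕ} (κ : Fin n → ℝ) (h : n < k) : Ssym n κ k = 0 := by
  rw [Ssym, Finset.powersetCard_eq_empty.mpr (by simpa using h), Finset.sum_empty]

theorem choose_mul_Hmc {n : ℕ} (κ : Fin n → ℝ) (k : ℕ) :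
    (n.choose k : ℝ) * Hmc n κ k = (-1) ^ k * Ssym n κ k := by
  rcases le_or_gt k n with h | h
  · exact mul_div_cancel₀ _ (Nat.cast_ne_zero.mpr (Nat.choose_pos h).ne')
  · rw [Nat.choose_eq_zero_of_lt h, Ssym_eq_zero_of_lt κ h, Nat.cast_zero, zero_mul, mul_zero]

section Real

variable {n : ℕ} {A : Matrix (Fin n) (Fin n) ℝ} {κ : Fin n → ℝ}

theorem coeff_charpolyRev_eq_choose_mul_Hmc (hchar : A.charpoly = ∏ i, (X - C (κ i))) (k : ℕ) :
    A.charpolyRev.coeff k = n.choose k * Hmc n κ k := by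
  rw [charpolyRev_eq_prod_of_charpoly_eq_prod hchar, coeff_prod_one_sub_X_mul_C, choose_mul_Hmc,
    Ssym]

theorem NewtonT_eq_newtonTransform (hchar : A.charpoly = ∏ i, (X - C (κ i))) (k : ℕ) :
    NewtonT n κ A k = newtonTransform A k := by
  induction k with
  | zero => rw [NewtonT, newtonTransform_zero]
  | succ k ih =>
    rw [NewtonT, newtonTransform_succ, ih, coeff_charpolyRev_eq_choose_mul_Hmc hchar]

end Real

theorem stmt8_general {n : ℕ} (A : Matrix (Fin n) (Fin n) ℝ) (κ : Fin n → ℝ)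
    (hchar : A.charpoly = ∏ i, (X - C (κ i))) (k : ℕ) :
    (A ^ 2 * NewtonT n κ A k).trace
      = (n.choose (k + 1) : ℝ) *
          ((n : ℝ) * Hmc n κ 1 * Hmc n κ (k + 1) - ((n : ℝ) - (k : ℝ) - 1) * Hmc n κ (k + 2)) := by
  rw [NewtonT_eq_newtonTransform hchar, trace_sq_mul_newtonTransform]
  simp only [coeff_charpolyRev_eq_choose_mul_Hmc hchar, Nat.choose_one_right]
  linear_combination Hmc n κ (k + 2) * cast_choose_succ_mul_sub (R := ℝ) n k

/-- For a real symmetric `n×n` matrix `A` with eigenvalues `κ₁,…,κₙ` listed with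
multiplicity, for every `0 ≤ k ≤ n−1` one has
`trace(A²·P_k) = binom(n,k+1)·( n·H_1·H_{k+1} − (n−k−1)·H_{k+2} )`
(where `H_j = 0` for `j > n`). -/
theorem stmt8 {n : ℕ} (hn : 1 ≤ n) (A : Matrix (Fin n) (Fin n) ℝ) (hA : A.IsSymm)
    (κ : Fin n → ℝ)
    (hchar : A.charpoly = ∏ i, (Polynomial.X - Polynomial.C (κ i)))
    (k : ℕ) (hk : k ≤ n - 1) :
    (A ^ 2 * NewtonT n κ A k).trace
      = (n.choose (k + 1) : ℝ) *
          ((n : ℝ) * Hmc n κ 1 * Hmc n κ (k + 1) - ((n : ℝ) - (k : ℝ) - 1) * Hmc n κ (k + 2)) := by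
  exact stmt8_general A κ hchar k
end

section
/- Fix n ≥ 1 and 0 ≤ k ≤ n−1. For an n×n real matrix M, define S_j(M) by the expansion det(t·I − M) = ∑_{j=0}^{n} (−1)^j·S_j(M)·t^{n−j} (so each S_j(M) is a polynomial function of the entries of M), set binom(n,j)·H_j(M) = (−1)^j·S_j(M), and define P_k(M) inductively by P_0(M) = I and P_j(M) = binom(n,j)·H_j(M)·I + M·P_{j−1}(M). Then for all real symmetric n×n matrices A and B, the function t ↦ H_{k+1}(A + t·B) is differentiable and binom(n,k+1) · (d/dt)|_{t=0} H_{k+1}(A + t·B) = −trace( P_k(A)·B ). -/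
/-- `S_j(M)`, defined by the expansion `det(t·I − M) = ∑_{j=0}^n (−1)^j·S_j(M)·t^{n−j}`:
since the characteristic polynomial `det(X·I − M)` is monic of degree `n`, this means
`S_j(M) = (−1)^j ·` (coefficient of `X^{n−j}` in the characteristic polynomial), a
polynomial function of the entries of `M`. -/
noncomputable def SM (n : ℕ) (M : Matrix (Fin n) (Fin n) ℝ) (j : ℕ) : ℝ :=
  (-1 : ℝ) ^ j * M.charpoly.coeff (n - j)

/-- `H_j(M)`, defined by `binom(n,j)·H_j(M) = (−1)^j·S_j(M)`. -/
noncomputable def HM (n : ℕ) (M : Matrix (Fin n) (Fin n) ℝ) (j : ℕ) : ℝ :=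
  (-1 : ℝ) ^ j * SM n M j / (n.choose j : ℝ)

/-- The Newton transformations `P_j(M)`, defined inductively by `P_0(M) = I` and
`P_j(M) = binom(n,j)·H_j(M)·I + M·P_{j−1}(M)`. -/
noncomputable def PM (n : ℕ) (M : Matrix (Fin n) (Fin n) ℝ) :
    ℕ → Matrix (Fin n) (Fin n) ℝ
  | 0 => 1
  | j + 1 => ((n.choose (j + 1) : ℝ) * HM n M (j + 1)) • (1 : Matrix (Fin n) (Fin n) ℝ)
      + M * PM n M j

/-! By Jacobi's formula, a derivation `D` of the ground ring, extended coefficientwise to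
polynomials, satisfies `D (det (X - M)) = -tr (adj (X - M) * D M)`. Comparing coefficients in
`(X - M) * adj (X - M) = det (X - M)` shows that the matrix coefficients of the adjugate satisfy the
recursion defining the Newton transformations. Reading off coefficients for the matrix `A + X • B`
over `ℝ[X]`, with `D` the derivative, and evaluating at `t` gives the theorem. -/

open Polynomial Matrix

section Derivation

variable {R S N ι : Type*} [CommRing R] [CommRing S] [Algebra R S]
  [AddCommGroup N] [Module S N] [Module R N] (D : Derivation R S N)

theorem derivation_prod [DecidableEq ι] (s : Finset ι) (f : ι → S) :
    D (∏ i ∈ s, f i) = ∑ i ∈ s, (∏ j ∈ s.erase i, f j) • D (f i) := by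
  induction s using Finset.induction_on with
  | empty => simp
  | insert a s ha ih =>
    have prod_erase : ∀ i ∈ s, ∏ j ∈ (insert a s).erase i, f j = f a * ∏ j ∈ s.erase i, f j := by
      intro i hi
      rw [Finset.erase_insert_of_ne (ne_of_mem_of_not_mem hi ha).symm,
        Finset.prod_insert fun h => ha (Finset.mem_of_mem_erase h)]
    rw [Finset.prod_insert ha, D.leibniz, ih, Finset.sum_insert ha, Finset.erase_insert ha,
      Finset.smul_sum, add_comm]
    congr 1
    exact Finset.sum_congr rfl fun i hi => by rw [prod_erase i hi, mul_smul]

variable [Fintype ι] [DecidableEq ι]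

theorem adjugate_apply_eq_sum_perm (M : Matrix ι ι S) (i j : ι) :
    M.adjugate i j = ∑ σ : Equiv.Perm ι,
      if σ i = j then (Equiv.Perm.sign σ : S) * ∏ l ∈ Finset.univ.erase i, M (σ l) l else 0 := by
  have adjugate_eq_det : M.adjugate i j = (M.updateCol i (Pi.single j 1)).det := by
    rw [← cramer_apply, cramer_eq_adjugate_mulVec, mulVec_single_one, col_apply]
  rw [adjugate_eq_det, det_apply']
  refine Finset.sum_congr rfl fun σ _ => ?_
  have prod_erase : ∏ l ∈ Finset.univ.erase i, M.updateCol i (Pi.single j 1) (σ l) l =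
      ∏ l ∈ Finset.univ.erase i, M (σ l) l :=
    Finset.prod_congr rfl fun l hl => by rw [updateCol_ne (Finset.ne_of_mem_erase hl)]
  rw [← Finset.mul_prod_erase _ _ (Finset.mem_univ i), prod_erase, updateCol_self, Pi.single_apply]
  split_ifs <;> simp

theorem derivation_det (M : Matrix ι ι S) :
    D M.det = ∑ i, ∑ j, M.adjugate i j • D (M j i) := by
  calc D M.det
      = ∑ σ : Equiv.Perm ι, ∑ i,
          ((Equiv.Perm.sign σ : S) * ∏ l ∈ Finset.univ.erase i, M (σ l) l) • D (M (σ i) i) := by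
        simp only [det_apply', map_sum, D.leibniz, D.map_intCast, smul_zero, add_zero,
          derivation_prod, Finset.smul_sum, mul_smul]
    _ = ∑ i, ∑ j, M.adjugate i j • D (M j i) := by
        rw [Finset.sum_comm]
        refine Finset.sum_congr rfl fun i _ => ?_
        simp only [adjugate_apply_eq_sum_perm, Finset.sum_smul, ite_smul, zero_smul]
        rw [Finset.sum_comm]
        simp only [Finset.sum_ite_eq, Finset.mem_univ, if_true]

theorem derivation_coeff_charpoly (M : Matrix ι ι S) (m : ℕ) :
    D (M.charpoly.coeff m) =
      -∑ i, ∑ j, (matPolyEquiv M.charmatrix.adjugate).coeff m i j • D (M j i) := by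
  have mapCoeffs_charmatrix (i j : ι) :
      D.mapCoeffs (M.charmatrix i j) = PolynomialModule.single S 0 (-D (M i j)) := by
    rw [charmatrix_apply, diagonal_apply, ← D.map_neg, ← D.mapCoeffs_C]
    split_ifs <;> simp
  have mapCoeffs_charpoly : D.mapCoeffs M.charpoly =
      ∑ i, ∑ j, M.charmatrix.adjugate i j • PolynomialModule.single S 0 (-D (M j i)) := by
    simp only [Matrix.charpoly, derivation_det, mapCoeffs_charmatrix]
  rw [← D.mapCoeffs_apply, mapCoeffs_charpoly]
  simp [PolynomialModule.smul_single_apply, matPolyEquiv_coeff_apply, Finsupp.finsetSum_apply]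

end Derivation

section NewtonTransformation

variable {R S ι : Type*} [CommRing R] [CommRing S] [Fintype ι] [DecidableEq ι]

/-- The Newton transformations of a square matrix over a commutative ring. Unlike in `PM`, the
scalar terms are the coefficients of the characteristic polynomial themselves: without the division
by binomial coefficients the definition makes sense for matrices of polynomials. The two agree for
`k ≤ n`; beyond that the subtraction truncates and the values are meaningless. -/
noncomputable def newtonTransformation (M : Matrix ι ι R) : ℕ → Matrix ι ι R
  | 0 => 1
  | k + 1 => M.charpoly.coeff (Fintype.card ι - (k + 1)) • 1 + M * newtonTransformation M k

theorem newtonTransformation_map (f : R →+* S) (M : Matrix ι ι R) (k : ℕ) :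
    newtonTransformation (M.map f) k = (newtonTransformation M k).map f := by
  induction k with
  | zero => simp [newtonTransformation]
  | succ k ih =>
    simp [newtonTransformation, ih, charpoly_map, Matrix.map_add, Matrix.map_mul, Matrix.map_smul']

theorem X_sub_C_mul_matPolyEquiv_adjugate_charmatrix (M : Matrix ι ι R) :
    (X - C M) * matPolyEquiv M.charmatrix.adjugate =
      M.charpoly.map (algebraMap R (Matrix ι ι R)) := by
  rw [← matPolyEquiv_charmatrix, ← map_mul, mul_adjugate, ← Matrix.charpoly, matPolyEquiv_smul_one]

theorem coeff_matPolyEquiv_adjugate_charmatrix (M : Matrix ι ι R) (m : ℕ) :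
    (matPolyEquiv M.charmatrix.adjugate).coeff m =
      M.charpoly.coeff (m + 1) • 1 + M * (matPolyEquiv M.charmatrix.adjugate).coeff (m + 1) := by
  have h := congrArg (coeff · (m + 1)) (X_sub_C_mul_matPolyEquiv_adjugate_charmatrix M)
  simp only [sub_mul, coeff_sub, coeff_X_mul, coeff_C_mul, coeff_map,
    Algebra.algebraMap_eq_smul_one] at h
  exact sub_eq_iff_eq_add.mp h

theorem natDegree_matPolyEquiv_adjugate_charmatrix_lt [Nonempty ι] (M : Matrix ι ι R) :
    (matPolyEquiv M.charmatrix.adjugate).natDegree < Fintype.card ι := by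
  rcases subsingleton_or_nontrivial R with _ | _
  · simp [Subsingleton.elim (matPolyEquiv M.charmatrix.adjugate) 0, Fintype.card_pos]
  by_cases hG : matPolyEquiv M.charmatrix.adjugate = 0
  · simp [hG, Fintype.card_pos]
  have degree_mul := (monic_X_sub_C M).natDegree_mul' hG
  have degree_charpoly : (M.charpoly.map (algebraMap R (Matrix ι ι R))).natDegree ≤
      Fintype.card ι :=
    natDegree_map_le.trans M.charpoly_natDegree_eq_dim.le
  rw [X_sub_C_mul_matPolyEquiv_adjugate_charmatrix, natDegree_X_sub_C] at degree_mul
  lia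

theorem coeff_matPolyEquiv_adjugate_charmatrix_eq_newtonTransformation (M : Matrix ι ι R) {k : ℕ}
    (hk : k < Fintype.card ι) :
    (matPolyEquiv M.charmatrix.adjugate).coeff (Fintype.card ι - (k + 1)) =
      newtonTransformation M k := by
  induction k with
  | zero =>
    have : Nonempty ι := Fintype.card_pos_iff.mp hk
    have charpoly_top : M.charpoly.coeff (Fintype.card ι) = 1 := by
      nontriviality R
      simpa using M.charpoly_monic.coeff_natDegree
    rw [zero_add, coeff_matPolyEquiv_adjugate_charmatrix, Nat.sub_add_cancel hk, charpoly_top,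
      coeff_eq_zero_of_natDegree_lt (natDegree_matPolyEquiv_adjugate_charmatrix_lt M)]
    simp [newtonTransformation]
  | succ k ih =>
    rw [coeff_matPolyEquiv_adjugate_charmatrix,
      show Fintype.card ι - (k + 1 + 1) + 1 = Fintype.card ι - (k + 1) by lia, ih (by lia),
      newtonTransformation]

theorem derivation_coeff_charpoly_eq_neg_trace [Algebra R S] (D : Derivation R S S)
    (M : Matrix ι ι S) {k : ℕ} (hk : k < Fintype.card ι) :
    D (M.charpoly.coeff (Fintype.card ι - (k + 1))) =
      -(newtonTransformation M k * M.map D).trace := by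
  rw [derivation_coeff_charpoly,
    coeff_matPolyEquiv_adjugate_charmatrix_eq_newtonTransformation M hk]
  simp [trace, mul_apply]

theorem hasDerivAt_coeff_charpoly {𝕜 : Type*} [NontriviallyNormedField 𝕜] (A B : Matrix ι ι 𝕜)
    {k : ℕ} (hk : k < Fintype.card ι) (t : 𝕜) :
    HasDerivAt (fun s => (A + s • B).charpoly.coeff (Fintype.card ι - (k + 1)))
      (-(newtonTransformation (A + t • B) k * B).trace) t := by
  let L : Matrix ι ι 𝕜[X] := A.map C + (X : 𝕜[X]) • B.map C
  have eval_L (s : 𝕜) : L.map (evalRingHom s) = A + s • B := by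
    ext; simp [L, mul_comm s]
  have derivative_L : L.map derivative' = B.map C := by
    ext1; simp [L, derivative']
  let p : 𝕜[X] := L.charpoly.coeff (Fintype.card ι - (k + 1))
  have eval_p (s : 𝕜) : (A + s • B).charpoly.coeff (Fintype.card ι - (k + 1)) = p.eval s := by
    rw [← eval_L, charpoly_map, coeff_map, coe_evalRingHom]
  have derivative_p : derivative p = -(newtonTransformation L k * B.map C).trace := by
    rw [← derivative_L]
    exact derivation_coeff_charpoly_eq_neg_trace derivative' L hk
  have map_eval_B : (B.map C).map (evalRingHom t) = B := by
    ext1; simp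
  have eval_derivative_p :
      (derivative p).eval t = -(newtonTransformation (A + t • B) k * B).trace := by
    rw [derivative_p, ← coe_evalRingHom, map_neg, AddMonoidHom.map_trace, Matrix.map_mul,
      ← newtonTransformation_map, eval_L, map_eval_B]
  simp only [eval_p, ← eval_derivative_p]
  exact p.hasDerivAt t

end NewtonTransformation

theorem HM_eq_coeff_charpoly_div (n : ℕ) (M : Matrix (Fin n) (Fin n) ℝ) (j : ℕ) :
    HM n M j = M.charpoly.coeff (n - j) / n.choose j := by
  rw [HM, SM, ← mul_assoc, ← mul_pow, neg_one_mul, neg_neg, one_pow, one_mul]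

theorem PM_eq_newtonTransformation {n k : ℕ} (hk : k ≤ n) (M : Matrix (Fin n) (Fin n) ℝ) :
    PM n M k = newtonTransformation M k := by
  induction k with
  | zero => rfl
  | succ k ih =>
    have choose_ne_zero : (n.choose (k + 1) : ℝ) ≠ 0 := mod_cast Nat.choose_ne_zero hk
    rw [PM, newtonTransformation, HM_eq_coeff_charpoly_div, mul_div_cancel₀ _ choose_ne_zero,
      ih (by lia), Fintype.card_fin]

theorem hasDerivAt_HM {n k : ℕ} (hk : k < n) (A B : Matrix (Fin n) (Fin n) ℝ) (t : ℝ) :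
    HasDerivAt (fun s : ℝ => HM n (A + s • B) (k + 1))
      (-(PM n (A + t • B) k * B).trace / n.choose (k + 1)) t := by
  have h := hasDerivAt_coeff_charpoly A B (hk.trans_eq (Fintype.card_fin n).symm) t
  simpa only [HM_eq_coeff_charpoly_div, PM_eq_newtonTransformation hk.le, Fintype.card_fin]
    using h.div_const (n.choose (k + 1) : ℝ)

theorem stmt9_general {n k : ℕ} (hk : k < n) (A B : Matrix (Fin n) (Fin n) ℝ) :
    Differentiable ℝ (fun t : ℝ => HM n (A + t • B) (k + 1)) ∧
    (n.choose (k + 1) : ℝ) * deriv (fun t : ℝ => HM n (A + t • B) (k + 1)) 0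
      = -(PM n A k * B).trace := by
  have choose_ne_zero : (n.choose (k + 1) : ℝ) ≠ 0 := mod_cast Nat.choose_ne_zero hk
  refine ⟨fun t => (hasDerivAt_HM hk A B t).differentiableAt, ?_⟩
  rw [(hasDerivAt_HM hk A B 0).deriv, mul_div_cancel₀ _ choose_ne_zero, zero_smul, add_zero]

/-- Fix `n ≥ 1` and `0 ≤ k ≤ n−1`. For all real symmetric `n×n` matrices `A` and `B`,
the function `t ↦ H_{k+1}(A + t·B)` is differentiable, and
`binom(n,k+1) · (d/dt)|_{t=0} H_{k+1}(A + t·B) = −trace( P_k(A)·B )`. -/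
theorem stmt9 {n : ℕ} (hn : 1 ≤ n) (k : ℕ) (hk : k ≤ n - 1)
    (A B : Matrix (Fin n) (Fin n) ℝ) (hA : A.IsSymm) (hB : B.IsSymm) :
    Differentiable ℝ (fun t : ℝ => HM n (A + t • B) (k + 1)) ∧
    (n.choose (k + 1) : ℝ) * deriv (fun t : ℝ => HM n (A + t • B) (k + 1)) 0
      = -(PM n A k * B).trace :=
  stmt9_general (by lia) A B
end
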